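/- arXiv:2103.07698 — 2 statements merged into one kernel-verified Lean document; each statement's English description precedes it below -/
import Mathlib

section
/- For every τ in the complex upper half plane, E₄(τ)³ − E₆(τ)² = 1728·η(τ)²⁴. -/
open Complex

/-- `q = exp(2πiτ)`. -/
noncomputable def qq (τ : ℂ) : ℂ := Complex.exp (2 * Real.pi * Complex.I * τ)

/-- `σ_k(n) = Σ_{d ∣ n} d^k`, as a complex number. -/
noncomputable def sigmaC (k n : ℕ) : ℂ := ∑ d ∈ n.divisors, (d : ℂ) ^ k

/-- Eisenstein series `E₂(τ) = 1 - 24 Σ_{n≥1} σ₁(n) qⁿ`. -/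
noncomputable def E₂ (τ : ℂ) : ℂ := 1 - 24 * ∑' n : ℕ, sigmaC 1 (n + 1) * qq τ ^ (n + 1)

/-- Eisenstein series `E₄(τ) = 1 + 240 Σ_{n≥1} σ₃(n) qⁿ`. -/
noncomputable def E₄ (τ : ℂ) : ℂ := 1 + 240 * ∑' n : ℕ, sigmaC 3 (n + 1) * qq τ ^ (n + 1)

/-- Eisenstein series `E₆(τ) = 1 - 504 Σ_{n≥1} σ₅(n) qⁿ`. -/
noncomputable def E₆ (τ : ℂ) : ℂ := 1 - 504 * ∑' n : ℕ, sigmaC 5 (n + 1) * qq τ ^ (n + 1)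

/-- Dedekind eta function `η(τ) = exp(πiτ/12) ∏_{n≥1} (1 - qⁿ)`. -/
noncomputable def η (τ : ℂ) : ℂ :=
  Complex.exp (Real.pi * Complex.I * τ / 12) * ∏' n : ℕ, (1 - qq τ ^ (n + 1))

/-- Theta function `θ(τ) = Σ_{n ∈ ℤ} q^{n²}`. -/
noncomputable def θ (τ : ℂ) : ℂ := ∑' n : ℤ, qq τ ^ (n ^ 2)

/-- The character `χ₋₄`: `χ₋₄(d) = 1, -1, 0` according as `d ≡ 1, 3, 0/2 (mod 4)`. -/
noncomputable def χ₄ (d : ℕ) : ℂ := if d % 4 = 1 then 1 else if d % 4 = 3 then -1 else 0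

/-- The character `χ₋₃`: `χ₋₃(d) = 1, -1, 0` according as `d ≡ 1, 2, 0 (mod 3)`. -/
noncomputable def χ₃ (d : ℕ) : ℂ := if d % 3 = 1 then 1 else if d % 3 = 2 then -1 else 0

/-- `E_{1,-4}(τ) = 1/4 + Σ_{n≥1} (Σ_{d∣n} χ₋₄(d)) qⁿ`. -/
noncomputable def E₁₄ (τ : ℂ) : ℂ :=
  1 / 4 + ∑' n : ℕ, (∑ d ∈ (n + 1).divisors, χ₄ d) * qq τ ^ (n + 1)

/-- `E_{1,-3}(τ) = 1/6 + Σ_{n≥1} (Σ_{d∣n} χ₋₃(d)) qⁿ`. -/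
noncomputable def E₁₃ (τ : ℂ) : ℂ :=
  1 / 6 + ∑' n : ℕ, (∑ d ∈ (n + 1).divisors, χ₃ d) * qq τ ^ (n + 1)

/-- `E_{2,2}(τ) = 2E₂(2τ) - E₂(τ)`. -/
noncomputable def E₂₂ (τ : ℂ) : ℂ := 2 * E₂ (2 * τ) - E₂ τ

/-- `E_{2,4}(τ) = (4E₄(2τ) - E₄(τ))/3`. -/
noncomputable def E₂₄ (τ : ℂ) : ℂ := (4 * E₄ (2 * τ) - E₄ τ) / 3

/-- `E_{3,2}(τ) = (3E₂(3τ) - E₂(τ))/2`. -/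
noncomputable def E₃₂ (τ : ℂ) : ℂ := (3 * E₂ (3 * τ) - E₂ τ) / 2

/-- `E_{3,4}(τ) = (9E₄(3τ) - E₄(τ))/8`. -/
noncomputable def E₃₄ (τ : ℂ) : ℂ := (9 * E₄ (3 * τ) - E₄ τ) / 8

/-- `E_{4,2}(τ) = (4E₂(4τ) - E₂(τ))/3`. -/
noncomputable def E₄₂ (τ : ℂ) : ℂ := (4 * E₂ (4 * τ) - E₂ τ) / 3

/-- `E'_{4,2}(τ) = 4E₂(4τ) - 4E₂(2τ) + E₂(τ)`. -/
noncomputable def E₄₂' (τ : ℂ) : ℂ := 4 * E₂ (4 * τ) - 4 * E₂ (2 * τ) + E₂ τ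

/-- `f_{1,j}(τ) = 2E₂(τ) - ((3+(-1)ʲi√3)/6)E₂(τ/2) - ((3-(-1)ʲi√3)/6)E₂((τ+1)/2)`. -/
noncomputable def f₁ (j : ℕ) (τ : ℂ) : ℂ :=
  2 * E₂ τ - ((3 + (-1 : ℂ) ^ j * Complex.I * Real.sqrt 3) / 6) * E₂ (τ / 2)
    - ((3 - (-1 : ℂ) ^ j * Complex.I * Real.sqrt 3) / 6) * E₂ ((τ + 1) / 2)

/-- `g_{1,j}(τ) = (3/2)E₂(τ) - (1/4) Σ_{0≤m≤2, m≢j (mod 3)} E₂((τ+m)/3)`. -/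
noncomputable def g₁ (j : ℕ) (τ : ℂ) : ℂ :=
  (3 / 2) * E₂ τ -
    (1 / 4) * ∑ m ∈ (Finset.range 3).filter (fun m => ¬ m % 3 = j % 3), E₂ ((τ + m) / 3)

/-- `f_{2,j}(τ) = 4E_{1,-4}(τ) + (-1)ʲ·2i·(E_{1,-4}(τ/2) - E_{1,-4}((τ+1)/2))`. -/
noncomputable def f₂ (j : ℕ) (τ : ℂ) : ℂ :=
  4 * E₁₄ τ + (-1 : ℂ) ^ j * 2 * Complex.I * (E₁₄ (τ / 2) - E₁₄ ((τ + 1) / 2))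

/-- `f_{3,j}(τ) = 6E_{1,-3}(2τ) + (-1)ʲ·i√3·(E_{1,-3}(τ/2) - E_{1,-3}((τ+1)/2))`. -/
noncomputable def f₃ (j : ℕ) (τ : ℂ) : ℂ :=
  6 * E₁₃ (2 * τ) +
    (-1 : ℂ) ^ j * Complex.I * Real.sqrt 3 * (E₁₃ (τ / 2) - E₁₃ ((τ + 1) / 2))

/-- `f_{4,j}(τ) = θ(τ/2 - (-1)ʲ/4)`. -/
noncomputable def f₄ (j : ℕ) (τ : ℂ) : ℂ := θ (τ / 2 - (-1 : ℂ) ^ j / 4)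

/-- `g_{4,j}(τ) = 2θ(2τ)² - θ((τ+j)/2)²`. -/
noncomputable def g₄ (j : ℕ) (τ : ℂ) : ℂ := 2 * θ (2 * τ) ^ 2 - θ ((τ + j) / 2) ^ 2

/-- `E_{3,-3,1}(τ) = -1/9 + Σ_{n≥1} (Σ_{d∣n} d²χ₋₃(d)) qⁿ`. -/
noncomputable def E₃₃₁ (τ : ℂ) : ℂ :=
  -(1 / 9) + ∑' n : ℕ, (∑ d ∈ (n + 1).divisors, (d : ℂ) ^ 2 * χ₃ d) * qq τ ^ (n + 1)

/-- `E_{3,1,-3}(τ) = Σ_{n≥1} (Σ_{d∣n} d²χ₋₃(n/d)) qⁿ`. -/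
noncomputable def E₃₁₃ (τ : ℂ) : ℂ :=
  ∑' n : ℕ, (∑ d ∈ (n + 1).divisors, (d : ℂ) ^ 2 * χ₃ ((n + 1) / d)) * qq τ ^ (n + 1)

/-!
The divisor-sum series are the `q`-expansions of the level-one Eisenstein series of weights `4` and
`6`: the coefficients `240` and `-504` are `-2k / B_k` for `k = 4, 6`. Both `E₄³ - E₆²` and `η²⁴`
are cusp forms of weight `12`. These form a one-dimensional space, so the two are proportional, and
their coefficients of `q`, namely `3 · 240 + 2 · 504 = 1728` and `1`, give the factor.
-/

open scoped UpperHalfPlane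

lemma bernoulli_four : bernoulli 4 = -1 / 30 := by
  rw [bernoulli_eq_bernoulli'_of_ne_one (by norm_num), bernoulli'_four]

lemma bernoulli_six : bernoulli 6 = 1 / 42 := by
  have bernoulli'_five : bernoulli' 5 = 0 := bernoulli'_eq_zero_of_odd (by decide) (by norm_num)
  rw [bernoulli_eq_bernoulli'_of_ne_one (by norm_num), bernoulli'_def]
  norm_num [Finset.sum_range_succ, Nat.choose, bernoulli'_five]

lemma sigmaC_eq_sigma (k n : ℕ) : sigmaC k n = (ArithmeticFunction.sigma k n : ℂ) := by
  simp [sigmaC, ArithmeticFunction.sigma_apply]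

lemma qq_eq_qParam (τ : ℂ) : qq τ = Function.Periodic.qParam 1 τ := by
  simp [qq, Function.Periodic.qParam]

lemma modularForm_E_eq_tsum_sigmaC {k : ℕ} (hk : 3 ≤ k) (hk_even : Even k) (z : ℍ) :
    ModularForm.E hk z =
      1 - 2 * k / bernoulli k * ∑' n : ℕ, sigmaC (k - 1) (n + 1) * qq z ^ (n + 1) := by
  rw [EisensteinSeries.q_expansion_bernoulli hk hk_even,
    ← tsum_pnat_eq_tsum_succ (f := fun n ↦ sigmaC (k - 1) n * qq z ^ n)]
  simp only [sigmaC_eq_sigma, qq, zpow_natCast]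

lemma E₄_eq_modularForm_E₄ (z : ℍ) : E₄ z = ModularForm.E₄ z := by
  rw [E₄, ModularForm.E₄, modularForm_E_eq_tsum_sigmaC (by norm_num) (by decide), bernoulli_four]
  norm_num

lemma E₆_eq_modularForm_E₆ (z : ℍ) : E₆ z = ModularForm.E₆ z := by
  rw [E₆, ModularForm.E₆, modularForm_E_eq_tsum_sigmaC (by norm_num) (by decide), bernoulli_six]
  norm_num

lemma η_eq_modularForm_eta (τ : ℂ) : η τ = ModularForm.eta τ := by
  have exp_eq_qParam : cexp (Real.pi * I * τ / 12) = Function.Periodic.qParam 24 τ := by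
    rw [Function.Periodic.qParam]
    congr 1
    push_cast
    ring
  rw [η, ModularForm.eta, exp_eq_qParam, qq_eq_qParam]

lemma modularForm_discriminant_eq_η_pow (z : ℍ) : ModularForm.discriminant z = η z ^ 24 := by
  rw [ModularForm.discriminant, η_eq_modularForm_eta]

theorem stmt0 (τ : ℂ) (hτ : 0 < τ.im) :
    E₄ τ ^ 3 - E₆ τ ^ 2 = 1728 * η τ ^ 24 := by
  let z : ℍ := ⟨τ, hτ⟩
  calc E₄ z ^ 3 - E₆ z ^ 2
      = ModularForm.E₄ z ^ 3 - ModularForm.E₆ z ^ 2 := by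
        rw [E₄_eq_modularForm_E₄, E₆_eq_modularForm_E₆]
    _ = 1728 * ModularForm.discriminant z := by
        rw [ModularForm.discriminant_eq_E₄_cube_sub_E₆_sq, mul_div_cancel₀ _ (by norm_num)]
    _ = 1728 * η z ^ 24 := by rw [modularForm_discriminant_eq_η_pow]
end

section
/- For j ∈ {0,1} and every τ in the complex upper half plane, f_{1,j}(−1/τ) = ((−1 − (−1)ʲ i√3)/2)·τ²·f_{1,j+1}(τ), where the index j+1 is taken modulo 2. -/
open Complex

/-!
The function `E₂₂ τ = 2 E₂(2τ) - E₂(τ)` satisfies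
`f₁ j τ = (3 + w) / 6 * E₂₂(τ / 2) + (3 - w) / 6 * E₂₂((τ + 1) / 2)` with `w = (-1)ʲ i√3`.
The quasimodular defect of `E₂` cancels in `E₂₂`, which is therefore modular of weight two on
`Γ₀(2)` and an eigenfunction of the Fricke involution. Hence `τ ↦ -1/τ` multiplies
`E₂₂((τ + 1) / 2)` by `τ²` and turns `E₂₂(τ / 2)` into `-2τ² E₂₂(τ)`. Since `E₂` is an
eigenfunction of the Hecke operator `T₂`, also `2 E₂₂(τ) = E₂₂(τ / 2) + E₂₂((τ + 1) / 2)`. So the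
span of the two functions on the right is stable under the weight-two action of `τ ↦ -1/τ`, and
`w² = -3` makes `f₁ j` go to a multiple of `f₁ (j + 1)`.
-/

open scoped ArithmeticFunction.sigma MatrixGroups

section DivisorSums

variable {p : ℕ}

lemma sigma_prime_mul_of_not_dvd (hp : p.Prime) (k : ℕ) {n : ℕ} (hn : ¬p ∣ n) :
    σ k (p * n) = (1 + p ^ k) * σ k n := by
  rw [ArithmeticFunction.isMultiplicative_sigma.map_mul_of_coprime
      (hp.coprime_iff_not_dvd.mpr hn),
    ArithmeticFunction.sigma_apply, hp.sum_divisors, one_pow, add_comm]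

lemma sigma_prime_mul_prime_mul_add (hp : p.Prime) (k n : ℕ) :
    σ k (p * (p * n)) + p ^ k * σ k n = (1 + p ^ k) * σ k (p * n) := by
  rcases eq_or_ne n 0 with rfl | hn
  · simp
  obtain ⟨e, m, hm, rfl⟩ := Nat.exists_eq_pow_mul_and_not_dvd hn p hp.ne_one
  have hmul (i : ℕ) : σ k (p ^ i * m) = (∑ l ∈ Finset.range (i + 1), p ^ (l * k)) * σ k m := by
    rw [ArithmeticFunction.isMultiplicative_sigma.map_mul_of_coprime
        ((hp.coprime_iff_not_dvd.mpr hm).pow_left i),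
      ArithmeticFunction.sigma_apply_prime_pow hp]
  rw [← mul_assoc p (p ^ e), ← pow_succ', ← mul_assoc p (p ^ (e + 1)), ← pow_succ',
    hmul, hmul, hmul]
  simp only [Finset.sum_range_succ]
  ring

lemma summable_norm_sigma_mul_pow (k : ℕ) {x : ℂ} (hx : ‖x‖ < 1) :
    Summable fun n : ℕ ↦ ‖(σ k n : ℂ) * x ^ n‖ := by
  refine (summable_norm_pow_mul_geometric_of_norm_lt_one (k + 1) hx).of_nonneg_of_le
    (fun _ ↦ norm_nonneg _) fun n ↦ ?_
  rw [norm_mul, norm_mul, ← Nat.cast_pow, norm_natCast, norm_natCast]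
  gcongr
  exact ArithmeticFunction.sigma_le_pow_succ k n

lemma tsum_sigma_prime_mul_mul_pow (hp : p.Prime) (k : ℕ) {x : ℂ} (hx : ‖x‖ < 1) :
    ∑' n : ℕ, (σ k (p * n) : ℂ) * x ^ n + p ^ k * ∑' n : ℕ, (σ k n : ℂ) * (x ^ p) ^ n
      = (1 + p ^ k) * ∑' n : ℕ, (σ k n : ℂ) * x ^ n := by
  have hxp : ‖x ^ p‖ < 1 := by
    rw [norm_pow]
    exact pow_lt_one₀ (norm_nonneg x) hx hp.ne_zero
  have hσ := (summable_norm_sigma_mul_pow k hx).of_norm.hasSum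
  have hσp := (summable_norm_sigma_mul_pow k hxp).of_norm.hasSum
  have hmultiple (n : ℕ) : (1 + p ^ k) * ((σ k (p * n) : ℂ) * x ^ (p * n))
      - σ k (p * (p * n)) * x ^ (p * n) = p ^ k * (σ k n * (x ^ p) ^ n) := by
    have h : (σ k (p * (p * n)) : ℂ) + p ^ k * σ k n = (1 + p ^ k) * σ k (p * n) :=
      mod_cast sigma_prime_mul_prime_mul_add hp k n
    rw [← pow_mul]
    linear_combination -x ^ (p * n) * h
  have hzero (n : ℕ) (hn : n ∉ Set.range (p * ·)) :
      (1 + p ^ k) * ((σ k n : ℂ) * x ^ n) - σ k (p * n) * x ^ n = 0 := by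
    have hdvd : ¬p ∣ n := fun ⟨m, hm⟩ ↦ hn ⟨m, hm.symm⟩
    rw [sigma_prime_mul_of_not_dvd hp k hdvd]
    push_cast
    ring
  have hdiff : HasSum (fun n ↦ (1 + p ^ k) * ((σ k n : ℂ) * x ^ n) - σ k (p * n) * x ^ n)
      (p ^ k * ∑' n : ℕ, (σ k n : ℂ) * (x ^ p) ^ n) :=
    ((mul_right_injective₀ hp.ne_zero).hasSum_iff hzero).mp
      ((hσp.mul_left _).congr_fun hmultiple)
  have hsum := (hσ.mul_left (1 + (p : ℂ) ^ k)).sub hdiff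
  simp only [sub_sub_cancel] at hsum
  rw [hsum.tsum_eq, sub_add_cancel]

end DivisorSums

section RootsOfUnity

lemma sum_range_pow_mul_of_isPrimitiveRoot {R : Type*} [CommRing R] [IsDomain R] {ζ : R} {N : ℕ}
    (hζ : IsPrimitiveRoot ζ N) (n : ℕ) :
    ∑ m ∈ Finset.range N, ζ ^ (m * n) = if N ∣ n then (N : R) else 0 := by
  simp only [mul_comm _ n, pow_mul]
  split_ifs with h
  · simp [(hζ.pow_eq_one_iff_dvd n).mpr h]
  · have hne : ζ ^ n - 1 ≠ 0 := sub_ne_zero.mpr (mt (hζ.pow_eq_one_iff_dvd n).mp h)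
    refine (mul_eq_zero.mp ?_).resolve_left hne
    rw [mul_geom_sum, pow_right_comm, hζ.pow_eq_one, one_pow, sub_self]

lemma sum_range_tsum_pow_mul_of_isPrimitiveRoot {𝕜 : Type*} [NormedField 𝕜] [CompleteSpace 𝕜]
    {ζ : 𝕜} {N : ℕ} (hN : N ≠ 0) (hζ : IsPrimitiveRoot ζ N) {a : ℕ → 𝕜}
    (ha : Summable fun n ↦ ‖a n‖) :
    ∑ m ∈ Finset.range N, ∑' n : ℕ, ζ ^ (m * n) * a n = N * ∑' n : ℕ, a (N * n) := by
  have hnorm : ‖ζ‖ = 1 := (hζ.isOfFinOrder hN).norm_eq_one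
  have hsum (m : ℕ) : Summable fun n ↦ ζ ^ (m * n) * a n :=
    .of_norm (ha.congr fun n ↦ by rw [norm_mul, norm_pow, hnorm, one_pow, one_mul])
  calc ∑ m ∈ Finset.range N, ∑' n : ℕ, ζ ^ (m * n) * a n
      = ∑' n : ℕ, (if N ∣ n then (N : 𝕜) else 0) * a n := by
        rw [← Summable.tsum_finsetSum fun m _ ↦ hsum m]
        simp only [← Finset.sum_mul, sum_range_pow_mul_of_isPrimitiveRoot hζ]
    _ = ∑' n : ℕ, N * a (N * n) := by
        rw [← (mul_right_injective₀ hN).tsum_eq]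
        · simp only [dvd_mul_right, if_true]
        · intro n hn
          obtain ⟨l, rfl⟩ : N ∣ n := by
            by_contra h
            simp [h] at hn
          exact ⟨l, rfl⟩
    _ = N * ∑' n : ℕ, a (N * n) := tsum_mul_left

end RootsOfUnity

section QParameter

lemma norm_qq_lt_one {τ : ℂ} (hτ : 0 < τ.im) : ‖qq τ‖ < 1 :=
  UpperHalfPlane.norm_exp_two_pi_I_lt_one ⟨τ, hτ⟩

lemma qq_natCast_mul (n : ℕ) (τ : ℂ) : qq (n * τ) = qq τ ^ n := by
  rw [qq, qq, ← exp_nat_mul]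
  ring_nf

lemma qq_add (τ υ : ℂ) : qq (τ + υ) = qq τ * qq υ := by
  rw [qq, qq, qq, ← exp_add, mul_add]

lemma qq_one : qq 1 = 1 := by
  rw [qq, mul_one, exp_two_pi_mul_I]

lemma isPrimitiveRoot_qq_inv {N : ℕ} (hN : N ≠ 0) : IsPrimitiveRoot (qq (N : ℂ)⁻¹) N :=
  isPrimitiveRoot_exp N hN

end QParameter

section HeckeOperator

lemma E₂_eq_tsum_sigma (τ : ℂ) : E₂ τ = 1 - 24 * ∑' n : ℕ, (σ 1 n : ℂ) * qq τ ^ n := by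
  have hsupp : (Function.support fun n : ℕ ↦ (σ 1 n : ℂ) * qq τ ^ n) ⊆ Set.range Nat.succ := by
    rintro (_ | n) hn
    · simp at hn
    · exact ⟨n, rfl⟩
  rw [← Nat.succ_injective.tsum_eq hsupp]
  simp [E₂, sigmaC, ArithmeticFunction.sigma_apply]

lemma E₂_add_one (τ : ℂ) : E₂ (τ + 1) = E₂ τ := by
  rw [E₂, E₂, qq_add, qq_one, mul_one]

lemma sum_range_E₂_add_div {N : ℕ} (hN : N ≠ 0) {τ : ℂ} (hτ : 0 < τ.im) :
    ∑ m ∈ Finset.range N, E₂ ((τ + m) / N)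
      = N * (1 - 24 * ∑' n : ℕ, (σ 1 (N * n) : ℂ) * qq τ ^ n) := by
  have hN' : (N : ℂ) ≠ 0 := Nat.cast_ne_zero.mpr hN
  have him : 0 < (τ / N).im := by
    rw [div_natCast_im]
    positivity
  have hrot (m n : ℕ) : qq ((τ + m) / N) ^ n = qq (N : ℂ)⁻¹ ^ (m * n) * qq (τ / N) ^ n := by
    rw [add_div, qq_add, div_eq_mul_inv (m : ℂ), qq_natCast_mul, mul_pow, ← pow_mul, mul_comm]
  have hpow (n : ℕ) : qq (τ / N) ^ (N * n) = qq τ ^ n := by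
    rw [pow_mul, ← qq_natCast_mul, mul_div_cancel₀ _ hN']
  have hsum := sum_range_tsum_pow_mul_of_isPrimitiveRoot hN (isPrimitiveRoot_qq_inv hN)
    (summable_norm_sigma_mul_pow 1 (norm_qq_lt_one him))
  simp only [hpow] at hsum
  simp only [E₂_eq_tsum_sigma, hrot, Finset.sum_sub_distrib, ← Finset.mul_sum,
    mul_left_comm (σ 1 _ : ℂ), hsum, Finset.sum_const, Finset.card_range, nsmul_eq_mul]
  ring

lemma E₂_hecke {p : ℕ} (hp : p.Prime) {τ : ℂ} (hτ : 0 < τ.im) :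
    ∑ m ∈ Finset.range p, E₂ ((τ + m) / p) + p ^ 2 * E₂ (p * τ) = p * (p + 1) * E₂ τ := by
  rw [sum_range_E₂_add_div hp.ne_zero hτ, E₂_eq_tsum_sigma (p * τ), E₂_eq_tsum_sigma τ,
    qq_natCast_mul]
  linear_combination -24 * (p : ℂ) * tsum_sigma_prime_mul_mul_pow hp 1 (norm_qq_lt_one hτ)

end HeckeOperator

section TransformationLaw

lemma E₂_coe_upperHalfPlane (z : UpperHalfPlane) : E₂ z = EisensteinSeries.E2 z := by
  rw [EisensteinSeries.E2_eq_tsum_cexp,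
    tsum_pnat_eq_tsum_succ (f := fun n ↦ (σ 1 n : ℂ) * cexp (2 * Real.pi * I * z) ^ n)]
  simp [E₂, qq, sigmaC, ArithmeticFunction.sigma_apply]

lemma E₂_moebius {a b c d : ℤ} (h : a * d - b * c = 1) {τ : ℂ} (hτ : 0 < τ.im) :
    E₂ ((a * τ + b) / (c * τ + d))
      = (c * τ + d) ^ 2 * E₂ τ - 6 * I * c * (c * τ + d) / Real.pi := by
  let γ : SL(2, ℤ) := ⟨!![a, b; c, d], by rw [Matrix.det_fin_two_of, h]⟩
  let z : UpperHalfPlane := ⟨τ, hτ⟩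
  have hdenom : UpperHalfPlane.denom γ z = c * τ + d := ModularGroup.denom_apply γ z
  have hne : (c * τ + d : ℂ) ≠ 0 := hdenom ▸ UpperHalfPlane.denom_ne_zero γ z
  have hsmul : ((γ • z : UpperHalfPlane) : ℂ) = (a * τ + b) / (c * τ + d) :=
    UpperHalfPlane.coe_specialLinearGroup_apply γ z
  have hslash : E₂ ((a * τ + b) / (c * τ + d)) * (c * τ + d) ^ (-2 : ℤ)
      = E₂ τ - 1 / (2 * (Real.pi ^ 2 / 6)) * (2 * Real.pi * I * c / (c * τ + d)) := by
    have := congrFun (EisensteinSeries.E2_slash_action γ) z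
    rwa [ModularForm.SL_slash_apply, Pi.sub_apply, Pi.smul_apply, EisensteinSeries.D2, hdenom,
      ← E₂_coe_upperHalfPlane, ← E₂_coe_upperHalfPlane, hsmul, riemannZeta_two] at this
  have hπ : (Real.pi : ℂ) ≠ 0 := ofReal_ne_zero.mpr Real.pi_ne_zero
  rw [zpow_neg, ← div_eq_mul_inv, div_eq_iff (zpow_ne_zero _ hne), zpow_ofNat] at hslash
  rw [hslash]
  field_simp

lemma E₂_neg_one_div {τ : ℂ} (hτ : 0 < τ.im) :
    E₂ (-1 / τ) = τ ^ 2 * E₂ τ - 6 * I * τ / Real.pi := by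
  simpa using E₂_moebius (a := 0) (b := -1) (c := 1) (d := 0) (by norm_num) hτ

end TransformationLaw

section LevelN

/-- The weight-two Eisenstein series `N E₂(Nτ) - E₂(τ)` on `Γ₀(N)`, in which the quasimodular
defect of `E₂` cancels. It is not normalised: its constant term is `N - 1`. -/
noncomputable def E₂Level (N : ℕ) (τ : ℂ) : ℂ := N * E₂ (N * τ) - E₂ τ

variable {N : ℕ} {τ : ℂ}

lemma natCast_mul_im_pos (hN : N ≠ 0) (hτ : 0 < τ.im) : 0 < (N * τ).im := by
  rw [← ofReal_natCast, im_ofReal_mul]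
  positivity

lemma E₂Level_moebius (hN : N ≠ 0) {a b c d : ℤ} (h : a * d - b * (N * c) = 1) (hτ : 0 < τ.im) :
    E₂Level N ((a * τ + b) / (N * c * τ + d)) = (N * c * τ + d) ^ 2 * E₂Level N τ := by
  have hE := E₂_moebius h hτ
  have hEN := E₂_moebius (a := a) (b := b * N) (c := c) (d := d)
    (by linear_combination h) (natCast_mul_im_pos hN hτ)
  have harg : (N : ℂ) * ((a * τ + b) / (N * c * τ + d))
      = (a * (N * τ) + (b * N : ℤ)) / (c * (N * τ) + d) := by
    push_cast
    ring_nf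
  push_cast at hE
  rw [E₂Level, E₂Level, harg, hE, hEN]
  ring

lemma E₂Level_fricke (hN : N ≠ 0) (hτ : 0 < τ.im) :
    E₂Level N (-1 / (N * τ)) = -(N * τ ^ 2) * E₂Level N τ := by
  have hN' : (N : ℂ) ≠ 0 := Nat.cast_ne_zero.mpr hN
  have harg : N * (-1 / (N * τ)) = -1 / τ := by
    rw [← mul_div_assoc, mul_div_mul_left _ _ hN']
  rw [E₂Level, E₂Level, harg, E₂_neg_one_div hτ, E₂_neg_one_div (natCast_mul_im_pos hN hτ)]
  ring

end LevelN

section LevelTwo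

variable {τ : ℂ}

lemma E₂₂_eq_E₂Level_two (τ : ℂ) : E₂₂ τ = E₂Level 2 τ := by
  rw [E₂₂, E₂Level, Nat.cast_ofNat]

lemma E₂₂_neg_one_div_div_two (hτ : 0 < τ.im) : E₂₂ (-1 / τ / 2) = -2 * τ ^ 2 * E₂₂ τ := by
  have h := E₂Level_fricke two_ne_zero hτ
  rw [Nat.cast_ofNat, mul_comm 2 τ, ← div_div] at h
  rw [E₂₂_eq_E₂Level_two, E₂₂_eq_E₂Level_two, h]
  ring

lemma E₂₂_neg_one_div_add_one_div_two (hτ : 0 < τ.im) :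
    E₂₂ ((-1 / τ + 1) / 2) = τ ^ 2 * E₂₂ ((τ + 1) / 2) := by
  have hτ0 : τ ≠ 0 := by
    rintro rfl
    simp at hτ
  have h := E₂Level_moebius (τ := (τ + 1) / 2) two_ne_zero (a := 1) (b := -1) (c := 1) (d := -1)
    (by norm_num) (by simpa using hτ)
  have hdenom : ((2 : ℕ) : ℂ) * (1 : ℤ) * ((τ + 1) / 2) + (-1 : ℤ) = τ := by
    push_cast
    ring
  have harg : (((1 : ℤ) : ℂ) * ((τ + 1) / 2) + (-1 : ℤ)) / τ = (-1 / τ + 1) / 2 := by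
    push_cast
    field_simp
    ring
  rwa [hdenom, harg, ← E₂₂_eq_E₂Level_two, ← E₂₂_eq_E₂Level_two] at h

lemma E₂₂_div_two_add_E₂₂_add_one_div_two (hτ : 0 < τ.im) :
    E₂₂ (τ / 2) + E₂₂ ((τ + 1) / 2) = 2 * E₂₂ τ := by
  have hecke := E₂_hecke Nat.prime_two hτ
  simp only [Finset.sum_range_succ, Finset.sum_range_zero, Nat.cast_zero, Nat.cast_one,
    Nat.cast_ofNat, add_zero, zero_add] at hecke
  simp only [E₂₂, mul_div_cancel₀ _ (two_ne_zero' ℂ), E₂_add_one]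
  linear_combination -hecke

lemma f₁_eq_E₂₂ (j : ℕ) (τ : ℂ) :
    f₁ j τ = (3 + (-1 : ℂ) ^ j * I * Real.sqrt 3) / 6 * E₂₂ (τ / 2)
      + (3 - (-1 : ℂ) ^ j * I * Real.sqrt 3) / 6 * E₂₂ ((τ + 1) / 2) := by
  simp only [f₁, E₂₂, mul_div_cancel₀ _ (two_ne_zero' ℂ), E₂_add_one]
  ring

end LevelTwo

lemma neg_one_pow_mul_I_mul_sqrt_three_sq (j : ℕ) :
    ((-1 : ℂ) ^ j * I * Real.sqrt 3) ^ 2 = -3 := by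
  have hsqrt : (Real.sqrt 3 : ℂ) ^ 2 = 3 := by
    exact_mod_cast Real.sq_sqrt zero_le_three
  rw [mul_pow, mul_pow, hsqrt, I_sq, pow_right_comm, neg_one_sq, one_pow]
  norm_num

theorem stmt3 (j : ℕ) (hj : j < 2) (τ : ℂ) (hτ : 0 < τ.im) :
    f₁ j (-1 / τ) = ((-1 - (-1 : ℂ) ^ j * Complex.I * Real.sqrt 3) / 2) * τ ^ 2 * f₁ (j + 1) τ := by
  have hw := neg_one_pow_mul_I_mul_sqrt_three_sq j
  have hw' : (-1 : ℂ) ^ (j + 1) * I * Real.sqrt 3 = -((-1) ^ j * I * Real.sqrt 3) := by ring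
  rw [f₁_eq_E₂₂, f₁_eq_E₂₂, hw', E₂₂_neg_one_div_div_two hτ, E₂₂_neg_one_div_add_one_div_two hτ]
  generalize (-1 : ℂ) ^ j * I * Real.sqrt 3 = w at hw ⊢
  linear_combination (3 + w) / 6 * τ ^ 2 * E₂₂_div_two_add_E₂₂_add_one_div_two hτ
    - τ ^ 2 * (E₂₂ (τ / 2) - E₂₂ ((τ + 1) / 2)) / 12 * hw
end
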